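/- Let S, R ⊆ R^n be finite with S nonempty and suppose conv(S) + cone(R) contains the origin. Then (conv(S) + cone(R))⁺⁺ = conv(S) + cone(R). -/

import Mathlib

open RealInnerProductSpace Pointwise

noncomputable def polarP {n : ℕ} (P : Set (EuclideanSpace ℝ (Fin n))) :
    Set (EuclideanSpace ℝ (Fin n)) :=
  {z | ∀ x ∈ P, 1 + ⟪z, x⟫ ≥ 0}

noncomputable def coneOf {n : ℕ} (R : Finset (EuclideanSpace ℝ (Fin n))) :
    Set (EuclideanSpace ℝ (Fin n)) :=
  {x | ∃ μ : EuclideanSpace ℝ (Fin n) → ℝ, (∀ r, 0 ≤ μ r) ∧ x = ∑ r ∈ R, μ r • r}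

/-!
The polyhedron `P = conv(S) + cone(R)` is convex, and it is closed because `conv(S)` is compact and
`cone(R)` is closed: by the conic form of Carathéodory's theorem, `cone(R)` is the union of finitely
many cones over linearly independent vectors, and each of these is the image of an orthant under a
closed embedding. A closed convex set containing the origin is its own bipolar: a hyperplane
strictly separating it from an outside point misses the origin, so its equation can be rescaled to
`⟪z, ·⟫ = -1`, and then `z` lies in the polar.
-/

open Set

section ConicCombinations

variable {𝕜 E ι : Type*} {v : ι → E}

lemma mem_hull_image_finset_iff_exists_nonneg [Semiring 𝕜] [PartialOrder 𝕜] [IsOrderedRing 𝕜]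
    [AddCommMonoid E] [Module 𝕜 E] {s : Finset ι} {x : E} :
    x ∈ PointedCone.hull 𝕜 (v '' s) ↔ ∃ c : ι → 𝕜, (∀ i, 0 ≤ c i) ∧ ∑ i ∈ s, c i • v i = x := by
  rw [PointedCone.hull, Submodule.mem_span_image_finset_iff_exists_fun']
  constructor
  · rintro ⟨c, hc⟩
    exact ⟨fun i ↦ c i, fun i ↦ (c i).2, hc⟩
  · rintro ⟨c, hc_nonneg, hc⟩
    exact ⟨fun i ↦ ⟨c i, hc_nonneg i⟩, hc⟩

lemma exists_sum_smul_eq_zero_pos_of_not_linearIndepOn [Ring 𝕜] [LinearOrder 𝕜] [IsOrderedRing 𝕜]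
    [AddCommGroup E] [Module 𝕜 E] {s : Finset ι} (hs : ¬ LinearIndepOn 𝕜 v s) :
    ∃ g : ι → 𝕜, ∑ i ∈ s, g i • v i = 0 ∧ ∃ i ∈ s, 0 < g i := by
  obtain ⟨g, hg, i, hi, hgi⟩ := not_linearIndepOn_finset_iff.1 hs
  rcases hgi.lt_or_gt with hneg | hpos
  · exact ⟨-g, by simp [hg], i, hi, by simpa using hneg⟩
  · exact ⟨g, hg, i, hi, hpos⟩

variable [Field 𝕜] [LinearOrder 𝕜] [IsStrictOrderedRing 𝕜] [AddCommGroup E] [Module 𝕜 E]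

lemma exists_mem_hull_image_erase_of_not_linearIndepOn [DecidableEq ι] {s : Finset ι} {x : E}
    (hs : ¬ LinearIndepOn 𝕜 v s) (hx : x ∈ PointedCone.hull 𝕜 (v '' s)) :
    ∃ i ∈ s, x ∈ PointedCone.hull 𝕜 (v '' (s.erase i)) := by
  obtain ⟨c, hc, rfl⟩ := mem_hull_image_finset_iff_exists_nonneg.1 hx
  obtain ⟨g, hg, j, hj, hgj⟩ := exists_sum_smul_eq_zero_pos_of_not_linearIndepOn hs
  -- `c i / g i` is the largest `t` for which `c - t • g` is nonnegative on `s`, and for it the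
  -- `i`-th coefficient vanishes.
  obtain ⟨i, hi, hmin⟩ := (s.filter (0 < g ·)).exists_min_image (fun k ↦ c k / g k)
    ⟨j, Finset.mem_filter.2 ⟨hj, hgj⟩⟩
  obtain ⟨his, hgi⟩ := Finset.mem_filter.1 hi
  set t := c i / g i
  have ht : 0 ≤ t := div_nonneg (hc i) hgi.le
  have hle : ∀ k ∈ s, t * g k ≤ c k := by
    intro k hk
    rcases lt_or_ge 0 (g k) with hgk | hgk
    · exact (le_div_iff₀ hgk).1 (hmin k (Finset.mem_filter.2 ⟨hk, hgk⟩))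
    · exact (mul_nonpos_of_nonneg_of_nonpos ht hgk).trans (hc k)
  have hvanish : c i - t * g i = 0 := sub_eq_zero.2 (div_mul_cancel₀ _ hgi.ne').symm
  have hsum : ∑ k ∈ s.erase i, (c k - t * g k) • v k = ∑ k ∈ s, c k • v k := by
    rw [Finset.sum_erase _ (by rw [hvanish, zero_smul])]
    simp only [sub_smul, mul_smul, Finset.sum_sub_distrib, ← Finset.smul_sum, hg, smul_zero,
      sub_zero]
  refine ⟨i, his, hsum ▸ Submodule.sum_mem _ fun k hk ↦ ?_⟩
  exact PointedCone.smul_mem _ (sub_nonneg.2 (hle k (Finset.mem_of_mem_erase hk)))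
    (PointedCone.subset_hull (mem_image_of_mem v hk))

theorem exists_linearIndepOn_mem_hull_image {s : Finset ι} {x : E}
    (hx : x ∈ PointedCone.hull 𝕜 (v '' s)) :
    ∃ t ⊆ s, LinearIndepOn 𝕜 v (t : Set ι) ∧ x ∈ PointedCone.hull 𝕜 (v '' t) := by
  classical
  induction s using Finset.strongInduction with
  | H s ih =>
    by_cases hs : LinearIndepOn 𝕜 v (s : Set ι)
    · exact ⟨s, subset_rfl, hs, hx⟩
    · obtain ⟨i, hi, hxi⟩ := exists_mem_hull_image_erase_of_not_linearIndepOn hs hx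
      obtain ⟨t, hti, ht⟩ := ih _ (Finset.erase_ssubset hi) hxi
      exact ⟨t, hti.trans (Finset.erase_subset i s), ht⟩

end ConicCombinations

section Closedness

variable {E ι : Type*} [AddCommGroup E] [Module ℝ E] [TopologicalSpace E]
  [IsTopologicalAddGroup E] [ContinuousSMul ℝ E] [T2Space E] {v : ι → E}

lemma isClosed_hull_range_of_linearIndependent [Finite ι] (hv : LinearIndependent ℝ v) :
    IsClosed (PointedCone.hull ℝ (range v) : Set E) := by
  cases nonempty_fintype ι
  have himage : (PointedCone.hull ℝ (range v) : Set E) =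
      Fintype.linearCombination ℝ v '' Ici 0 := by
    ext x
    rw [SetLike.mem_coe, ← image_univ, ← Finset.coe_univ, mem_hull_image_finset_iff_exists_nonneg]
    rfl
  have hinj : LinearMap.ker (Fintype.linearCombination ℝ v) = ⊥ :=
    LinearMap.ker_eq_bot.2 hv.fintypeLinearCombination_injective
  rw [himage]
  exact (LinearMap.isClosedEmbedding_of_injective hinj).isClosedMap _ isClosed_Ici

theorem isClosed_pointedCone_of_fg {C : PointedCone ℝ E} (hC : C.FG) : IsClosed (C : Set E) := by
  obtain ⟨s, rfl⟩ := hC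
  have hunion : (PointedCone.hull ℝ (s : Set E) : Set E) =
      ⋃ t ∈ {t : Finset E | t ⊆ s ∧ LinearIndepOn ℝ id (t : Set E)},
        (PointedCone.hull ℝ (t : Set E) : Set E) := by
    refine Subset.antisymm (fun x hx ↦ ?_) (iUnion₂_subset fun t ht ↦ Submodule.span_mono ht.1)
    rw [SetLike.mem_coe, ← image_id (s : Set E)] at hx
    obtain ⟨t, hts, ht, hxt⟩ := exists_linearIndepOn_mem_hull_image hx
    rw [image_id] at hxt
    exact mem_iUnion₂.2 ⟨t, ⟨hts, ht⟩, hxt⟩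
  have hfinite : {t : Finset E | t ⊆ s ∧ LinearIndepOn ℝ id (t : Set E)}.Finite :=
    s.powerset.finite_toSet.subset fun t ht ↦ Finset.mem_powerset.2 ht.1
  rw [hunion]
  refine hfinite.isClosed_biUnion fun t ht ↦ ?_
  simpa using isClosed_hull_range_of_linearIndependent ht.2

end Closedness

lemma exists_strongDual_lt_neg_one_of_notMem {E : Type*} [AddCommGroup E] [Module ℝ E]
    [TopologicalSpace E] [IsTopologicalAddGroup E] [ContinuousSMul ℝ E] [LocallyConvexSpace ℝ E]
    {P : Set E} {x : E}
    (hconv : Convex ℝ P) (hclosed : IsClosed P) (hzero : 0 ∈ P) (hx : x ∉ P) :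
    ∃ f : StrongDual ℝ E, f x < -1 ∧ ∀ y ∈ P, -1 < f y := by
  obtain ⟨f, u, hfx, hfP⟩ := geometric_hahn_banach_point_closed hconv hclosed hx
  have hu : 0 < -u := by simpa using hfP 0 hzero
  refine ⟨(-u)⁻¹ • f, ?_, fun y hy ↦ ?_⟩
  · rw [smul_apply, smul_eq_mul, inv_mul_lt_iff₀ hu]
    linarith
  · rw [smul_apply, smul_eq_mul, lt_inv_mul_iff₀ hu]
    linarith [hfP y hy]

section Polyhedra

variable {n : ℕ}

lemma subset_polarP_polarP (P : Set (EuclideanSpace ℝ (Fin n))) : P ⊆ polarP (polarP P) := by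
  intro x hx z hz
  rw [real_inner_comm]
  exact hz x hx

theorem polarP_polarP_eq_self {P : Set (EuclideanSpace ℝ (Fin n))} (hconv : Convex ℝ P)
    (hclosed : IsClosed P) (hzero : 0 ∈ P) : polarP (polarP P) = P := by
  refine Subset.antisymm (fun x hx ↦ ?_) (subset_polarP_polarP P)
  by_contra hxP
  obtain ⟨f, hfx, hfP⟩ := exists_strongDual_lt_neg_one_of_notMem hconv hclosed hzero hxP
  obtain ⟨z, rfl⟩ := (InnerProductSpace.toDual ℝ (EuclideanSpace ℝ (Fin n))).surjective f
  simp only [InnerProductSpace.toDual_apply_apply] at hfx hfP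
  have hz : z ∈ polarP P := fun y hy ↦ by linarith [hfP y hy]
  have hxz : 1 + ⟪x, z⟫ ≥ 0 := hx z hz
  rw [real_inner_comm] at hxz
  linarith

lemma coneOf_eq_hull (R : Finset (EuclideanSpace ℝ (Fin n))) :
    coneOf R = PointedCone.hull ℝ (R : Set (EuclideanSpace ℝ (Fin n))) := by
  ext x
  rw [SetLike.mem_coe, ← image_id (R : Set (EuclideanSpace ℝ (Fin n))),
    mem_hull_image_finset_iff_exists_nonneg]
  simp only [coneOf, mem_ofPred_eq, id_eq, eq_comm]

lemma convex_coneOf (R : Finset (EuclideanSpace ℝ (Fin n))) : Convex ℝ (coneOf R) :=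
  coneOf_eq_hull R ▸ PointedCone.convex _

lemma isClosed_coneOf (R : Finset (EuclideanSpace ℝ (Fin n))) : IsClosed (coneOf R) :=
  coneOf_eq_hull R ▸ isClosed_pointedCone_of_fg ⟨R, rfl⟩

end Polyhedra

theorem stmt17 {n : ℕ} (S R : Finset (EuclideanSpace ℝ (Fin n))) (hS : S.Nonempty)
    (h0 : (0 : EuclideanSpace ℝ (Fin n)) ∈
      convexHull ℝ (S : Set (EuclideanSpace ℝ (Fin n))) + coneOf R) :
    polarP (polarP (convexHull ℝ (S : Set (EuclideanSpace ℝ (Fin n))) + coneOf R)) =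
      convexHull ℝ (S : Set (EuclideanSpace ℝ (Fin n))) + coneOf R := by
  have hcompact : IsCompact (convexHull ℝ (S : Set (EuclideanSpace ℝ (Fin n)))) :=
    S.finite_toSet.isCompact_convexHull ℝ
  have hconv := (convex_convexHull ℝ (S : Set (EuclideanSpace ℝ (Fin n)))).add (convex_coneOf R)
  have hclosed := (isClosed_coneOf R).add_left_of_isCompact hcompact
  exact polarP_polarP_eq_self hconv hclosed h0
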